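/- Let H be a real Hilbert space, let 0 < c₁, c₂ < ∞ with c₁ ≠ c₂, let λ ∈ (0,∞) with λ ∉ {c₁, c₂, σ(c₁,c₂)} where σ(c₁,c₂) = ((c₁⁻² + c₂⁻²)/2)^{−1/2}, let s ∈ {−1,1}, let J be a unitary operator on H, and let n ∈ H be a unit vector. If a vector w ∈ M(H) satisfies W_{λ,c₁}[s,n,J] w = W_{λ,c₂}[s,n,J] w, then T(w) = 0 and ⟨n,w⟩ = 0. -/

import Mathlib

open scoped InnerProductSpace

/-- Generalized Lorentz transform `W_{λ,c}[s,n,J]` on `M(H) = ℝ × H` (case `λ < ∞`, `c < ∞`). -/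
noncomputable def Wfin {H : Type*} [NormedAddCommGroup H] [InnerProductSpace ℝ H]
    (lam c s : ℝ) (n : H) (J : H ≃ₗᵢ[ℝ] H) (w : ℝ × H) : ℝ × H :=
  ((s * w.1 - lam / c ^ 2 * ⟪n, w.2⟫_ℝ) / Real.sqrt |1 - lam ^ 2 / c ^ 2|,
    J (((lam * w.1 - s * ⟪n, w.2⟫_ℝ) / Real.sqrt |1 - lam ^ 2 / c ^ 2|) • n
      + (w.2 - ⟪n, w.2⟫_ℝ • n)))

/-- Generalized Lorentz transform `W_{λ,∞}[s,n,J]` on `M(H) = ℝ × H` (case `c = ∞`). -/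
noncomputable def Wgal {H : Type*} [NormedAddCommGroup H] [InnerProductSpace ℝ H]
    (lam s : ℝ) (n : H) (J : H ≃ₗᵢ[ℝ] H) (w : ℝ × H) : ℝ × H :=
  (s * w.1, J ((lam * w.1 - s * ⟪n, w.2⟫_ℝ) • n + (w.2 - ⟪n, w.2⟫_ℝ • n)))

/-- Generalized Lorentz transform `W_{∞,c}[s,n,J]` on `M(H) = ℝ × H` (case `λ = ∞`). -/
noncomputable def Wtach {H : Type*} [NormedAddCommGroup H] [InnerProductSpace ℝ H]
    (c s : ℝ) (n : H) (J : H ≃ₗᵢ[ℝ] H) (w : ℝ × H) : ℝ × H :=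
  (-⟪n, w.2⟫_ℝ / c, J ((c * w.1) • n + (w.2 - ⟪n, w.2⟫_ℝ • n)))

/-! The hypotheses on `λ`, `c₁`, `c₂` say that the factors `√|1 - λ² / c₁²|` and `√|1 - λ² / c₂²|`
differ. In the space part of `W_{λ,c} w` the number `λ T(w) - s ⟨n, w⟩` is divided by this factor,
so equality of the space parts forces `λ T(w) = s ⟨n, w⟩`: the vector `w` moves along `n` with
velocity `s λ`. For such a `w` the time part is `± T(w) √|1 - λ² / c²|`, so equality of the time
parts forces `T(w) = 0`. -/

lemma div_right_inj_of_ne_zero {G₀ : Type*} [GroupWithZero G₀] {a b c : G₀} (ha : a ≠ 0) :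
    a / b = a / c ↔ b = c := by
  rw [div_eq_mul_inv, div_eq_mul_inv, mul_right_inj' ha, inv_inj]

lemma abs_one_sub_sq_div_sq_eq_iff {lam : ℝ} (hlam : lam ≠ 0) (c₁ c₂ : ℝ) :
    |1 - lam ^ 2 / c₁ ^ 2| = |1 - lam ^ 2 / c₂ ^ 2| ↔
      c₁ ^ 2 = c₂ ^ 2 ∨ (lam ^ 2)⁻¹ = ((c₁ ^ 2)⁻¹ + (c₂ ^ 2)⁻¹) / 2 := by
  have hlam_sq : lam ^ 2 ≠ 0 := pow_ne_zero 2 hlam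
  rw [abs_eq_abs]
  refine or_congr ?_ ?_
  · rw [sub_right_inj, div_right_inj_of_ne_zero hlam_sq]
  · rw [eq_comm (a := (lam ^ 2)⁻¹), ← mul_eq_one_iff_eq_inv₀ hlam_sq]
    constructor <;> intro h
    · linear_combination -h / 2
    · linear_combination -2 * h

lemma inv_sq_rpow_neg_half {a : ℝ} (ha : 0 ≤ a) : (a ^ 2)⁻¹ ^ (-(1 / 2 : ℝ)) = a := by
  rw [Real.rpow_neg (by positivity), ← Real.sqrt_eq_rpow, Real.sqrt_inv, inv_inv, Real.sqrt_sq ha]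

section Wfin

variable {H : Type*} [NormedAddCommGroup H] [InnerProductSpace ℝ H]
  {lam c₁ c₂ s : ℝ} {n : H} {J : H ≃ₗᵢ[ℝ] H} {w : ℝ × H}

lemma mul_fst_eq_mul_inner_of_Wfin_snd_eq (hn : n ≠ 0)
    (hc : |1 - lam ^ 2 / c₁ ^ 2| ≠ |1 - lam ^ 2 / c₂ ^ 2|)
    (hw : (Wfin lam c₁ s n J w).2 = (Wfin lam c₂ s n J w).2) :
    lam * w.1 = s * ⟪n, w.2⟫_ℝ := by
  have hcoeff : (lam * w.1 - s * ⟪n, w.2⟫_ℝ) / √|1 - lam ^ 2 / c₁ ^ 2| =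
      (lam * w.1 - s * ⟪n, w.2⟫_ℝ) / √|1 - lam ^ 2 / c₂ ^ 2| :=
    smul_left_injective ℝ hn (add_right_cancel (J.injective hw))
  by_contra hne
  have hsqrt := (div_right_inj_of_ne_zero (sub_ne_zero.2 hne)).1 hcoeff
  exact hc ((Real.sqrt_inj (abs_nonneg _) (abs_nonneg _)).1 hsqrt)

lemma abs_Wfin_fst_of_mul_fst_eq (hs : s = 1 ∨ s = -1) (hw : lam * w.1 = s * ⟪n, w.2⟫_ℝ) (c : ℝ) :
    |(Wfin lam c s n J w).1| = |w.1| * √|1 - lam ^ 2 / c ^ 2| := by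
  have hnum : s * w.1 - lam / c ^ 2 * ⟪n, w.2⟫_ℝ = s * w.1 * (1 - lam ^ 2 / c ^ 2) := by
    linear_combination lam / c ^ 2 * (s * hw + ⟪n, w.2⟫_ℝ * mul_self_eq_one_iff.2 hs)
  have hs_abs : |s| = 1 := (abs_eq zero_le_one).2 hs
  calc |(Wfin lam c s n J w).1|
      = |s| * |w.1| * (|1 - lam ^ 2 / c ^ 2| / √|1 - lam ^ 2 / c ^ 2|) := by
        rw [Wfin, hnum, abs_div, abs_mul, abs_mul, abs_of_nonneg (Real.sqrt_nonneg _),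
          mul_div_assoc]
    _ = |w.1| * √|1 - lam ^ 2 / c ^ 2| := by rw [hs_abs, one_mul, Real.div_sqrt]

theorem fst_eq_zero_and_inner_eq_zero_of_Wfin_eq (hs : s = 1 ∨ s = -1) (hn : n ≠ 0)
    (hc : |1 - lam ^ 2 / c₁ ^ 2| ≠ |1 - lam ^ 2 / c₂ ^ 2|)
    (hw : Wfin lam c₁ s n J w = Wfin lam c₂ s n J w) :
    w.1 = 0 ∧ ⟪n, w.2⟫_ℝ = 0 := by
  have hvel : lam * w.1 = s * ⟪n, w.2⟫_ℝ :=
    mul_fst_eq_mul_inner_of_Wfin_snd_eq hn hc (congrArg Prod.snd hw)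
  have htime : |w.1| * √|1 - lam ^ 2 / c₁ ^ 2| = |w.1| * √|1 - lam ^ 2 / c₂ ^ 2| := by
    rw [← abs_Wfin_fst_of_mul_fst_eq (J := J) hs hvel, hw, abs_Wfin_fst_of_mul_fst_eq hs hvel]
  have ht : w.1 = 0 := by
    by_contra hne
    have hsqrt := mul_left_cancel₀ (abs_ne_zero.2 hne) htime
    exact hc ((Real.sqrt_inj (abs_nonneg _) (abs_nonneg _)).1 hsqrt)
  have hs_ne : s ≠ 0 := by rcases hs with rfl | rfl <;> norm_num
  rw [ht, mul_zero, eq_comm] at hvel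
  exact ⟨ht, (mul_eq_zero.1 hvel).resolve_left hs_ne⟩

end Wfin

theorem stmt7_general {H : Type*} [NormedAddCommGroup H] [InnerProductSpace ℝ H]
    (c₁ c₂ : ℝ) (hc₁ : 0 < c₁) (hc₂ : 0 < c₂) (hcc : c₁ ≠ c₂)
    (lam : ℝ) (hlam : 0 < lam) (_hl₁ : lam ≠ c₁) (_hl₂ : lam ≠ c₂)
    (hlσ : lam ≠ (((c₁ ^ 2)⁻¹ + (c₂ ^ 2)⁻¹) / 2) ^ (-(1 / 2 : ℝ)))
    (s : ℝ) (hs : s = 1 ∨ s = -1) (J : H ≃ₗᵢ[ℝ] H) (n : H) (hn : n ≠ 0)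
    (w : ℝ × H) (hw : Wfin lam c₁ s n J w = Wfin lam c₂ s n J w) :
    w.1 = 0 ∧ ⟪n, w.2⟫_ℝ = 0 := by
  refine fst_eq_zero_and_inner_eq_zero_of_Wfin_eq hs hn (fun hc => ?_) hw
  rcases (abs_one_sub_sq_div_sq_eq_iff hlam.ne' c₁ c₂).1 hc with hsq | hσ
  · exact hcc ((pow_left_inj₀ hc₁.le hc₂.le two_ne_zero).1 hsq)
  · exact hlσ (by rw [← hσ, inv_sq_rpow_neg_half hlam.le])

/-- Lemma: if `0 < c₁,c₂ < ∞`, `c₁ ≠ c₂`, `λ ∈ (0,∞)` with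
`λ ∉ {c₁, c₂, σ(c₁,c₂)}` where `σ(c₁,c₂) = ((c₁⁻² + c₂⁻²)/2)^(−1/2)`, and
`W_{λ,c₁}[s,n,J] w = W_{λ,c₂}[s,n,J] w`, then `T(w) = 0` and `⟨n,w⟩ = 0`. -/
theorem stmt7 {H : Type*} [NormedAddCommGroup H] [InnerProductSpace ℝ H] [CompleteSpace H]
    (c₁ c₂ : ℝ) (hc₁ : 0 < c₁) (hc₂ : 0 < c₂) (hcc : c₁ ≠ c₂)
    (lam : ℝ) (hlam : 0 < lam) (hl₁ : lam ≠ c₁) (hl₂ : lam ≠ c₂)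
    (hlσ : lam ≠ (((c₁ ^ 2)⁻¹ + (c₂ ^ 2)⁻¹) / 2) ^ (-(1 / 2 : ℝ)))
    (s : ℝ) (hs : s = 1 ∨ s = -1) (J : H ≃ₗᵢ[ℝ] H) (n : H) (hn : ‖n‖ = 1)
    (w : ℝ × H) (hw : Wfin lam c₁ s n J w = Wfin lam c₂ s n J w) :
    w.1 = 0 ∧ ⟪n, w.2⟫_ℝ = 0 := by
  exact stmt7_general c₁ c₂ hc₁ hc₂ hcc lam hlam hl₁ hl₂ hlσ s hs J n
    (norm_ne_zero_iff.1 (hn ▸ one_ne_zero)) w hw
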